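/- arXiv:1303.1421 — 2 statements merged into one kernel-verified Lean document; each statement's English description precedes it below -/
import Mathlib

section
/- Let Ω ⊆ ℝⁿ be open, let f : Ω → ℝ be continuous, and let A be a smooth field of symmetric n×n real matrices on Ω. Suppose that for every smooth, compactly supported vector field W : Ω → ℝⁿ whose Euclidean norm ‖W‖ is a C¹ function on Ω, the function f is a viscosity supersolution of the equation −Σ_{i,j} WⁱWʲ ∂ᵢⱼf + Σ_{i,j} A_{ij}WⁱWʲ = 0 on Ω. Then f satisfies Hess f ≤ A at every point of Ω in the viscosity sense. -/
open Finset

/-- Second partial derivative `∂_j ∂_i h` at `p`: the `(i,j)` entry of the Hessian matrix. -/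
noncomputable def hess2 {n : ℕ} (h : (Fin n → ℝ) → ℝ) (p : Fin n → ℝ) (i j : Fin n) : ℝ :=
  fderiv ℝ (fun x => fderiv ℝ h x (Pi.single i 1)) p (Pi.single j 1)

/-!
A test function `h` touching `f` from below at `p` is only defined near `p`, whereas the
supersolution inequality needs a test function touching `f` from below on all of `Ω`. Being equal
to `h` near `p` and at most `f` on `Ω` is a condition with convex fibres and local solutions (`h`
itself, or a local lower bound of `f`), so a partition of unity produces a global `C²` test function
with the same Hessian at `p`. Testing against `W = χ v`, with `χ` a bump function equal to `1` at
`p`, then gives the inequality in direction `v`; the Euclidean norm `χ ‖v‖` of `W` is smooth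
because `χ ≥ 0`.
-/

open Filter
open scoped Topology Manifold

section ConvexGluing

variable {E : Type*} [NormedAddCommGroup E] [NormedSpace ℝ E] [FiniteDimensional ℝ E]
  {Ω : Set E} {m : ℕ∞}

theorem exists_contDiffOn_forall_mem_convex_of_local
    {F : Type*} [NormedAddCommGroup F] [NormedSpace ℝ F] {t : E → Set F} (hΩ : IsOpen Ω)
    (ht : ∀ x ∈ Ω, Convex ℝ (t x))
    (Hloc : ∀ x ∈ Ω, ∃ V ∈ 𝓝 x, ∃ g : E → F, ContDiffOn ℝ m g V ∧ ∀ y ∈ V, g y ∈ t y) :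
    ∃ g : E → F, ContDiffOn ℝ m g Ω ∧ ∀ x ∈ Ω, g x ∈ t x := by
  let O : TopologicalSpace.Opens E := ⟨Ω, hΩ⟩
  have : LocallyCompactSpace O := hΩ.locallyCompactSpace
  obtain ⟨g, hgt⟩ : ∃ g : C^m⟮𝓘(ℝ, E), O; 𝓘(ℝ, F), F⟯, ∀ x : O, g x ∈ t x := by
    refine exists_contMDiffMap_forall_mem_convex_of_local 𝓘(ℝ, E) (fun x ↦ ht x x.2) fun x ↦ ?_
    obtain ⟨V, hV, g, hg, hgt⟩ := Hloc x x.2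
    exact ⟨Subtype.val ⁻¹' V, continuous_subtype_val.continuousAt hV, g ∘ Subtype.val,
      hg.contMDiffOn.comp contMDiff_subtype_val.contMDiffOn subset_rfl, fun y hy ↦ hgt y hy⟩
  let G : E → F := Function.extend Subtype.val g 0
  have hG (x : O) : G x = g x := Subtype.val_injective.extend_apply g 0 x
  refine ⟨G, fun x hx ↦ ?_, fun x hx ↦ hG ⟨x, hx⟩ ▸ hgt ⟨x, hx⟩⟩
  have hGx : ContMDiffAt 𝓘(ℝ, E) 𝓘(ℝ, F) m (fun y : O ↦ G y) ⟨x, hx⟩ :=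
    (funext hG : (fun y : O ↦ G y) = g) ▸ g.contMDiff ⟨x, hx⟩
  exact (contMDiffAt_subtype_iff.1 hGx).contDiffAt.contDiffWithinAt

theorem exists_contDiffOn_le_eventuallyEq {f h : E → ℝ} {U : Set E} {p : E} (hΩ : IsOpen Ω)
    (hf : ∀ x ∈ Ω, (𝓝[Ω] x).IsBoundedUnder (· ≥ ·) f) (hp : p ∈ Ω)
    (hU : U ∈ 𝓝 p) (hh : ContDiffOn ℝ m h U) (hle : ∀ x ∈ U, h x ≤ f x) :
    ∃ φ : E → ℝ, ContDiffOn ℝ m φ Ω ∧ (∀ x ∈ Ω, φ x ≤ f x) ∧ φ =ᶠ[𝓝 p] h := by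
  obtain ⟨K, hKp, hK, hKU⟩ := exists_mem_nhds_isClosed_subset (interior_mem_nhds.2 hU)
  let t (x : E) : Set ℝ := Set.Iic (f x) ∩ ⋂ _ : x ∈ K, {h x}
  have ht (x : E) : Convex ℝ (t x) :=
    (convex_Iic (f x)).inter (convex_iInter fun _ ↦ convex_singleton (h x))
  obtain ⟨φ, hφ, hφt⟩ : ∃ φ : E → ℝ, ContDiffOn ℝ m φ Ω ∧ ∀ x ∈ Ω, φ x ∈ t x := by
    refine exists_contDiffOn_forall_mem_convex_of_local hΩ (fun x _ ↦ ht x) fun x hx ↦ ?_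
    by_cases hxK : x ∈ K
    · exact ⟨U, mem_interior_iff_mem_nhds.1 (hKU hxK), h, hh,
        fun y hy ↦ ⟨hle y hy, Set.mem_iInter.2 fun _ ↦ rfl⟩⟩
    · obtain ⟨c, hc⟩ := hf x hx
      rw [hΩ.nhdsWithin_eq hx, eventually_map] at hc
      exact ⟨_, inter_mem hc (hK.isOpen_compl.mem_nhds hxK), fun _ ↦ c, contDiffOn_const,
        fun y hy ↦ ⟨hy.1, Set.mem_iInter.2 fun hyK ↦ absurd hyK hy.2⟩⟩
  refine ⟨φ, hφ, fun x hx ↦ (hφt x hx).1, ?_⟩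
  filter_upwards [hKp, hΩ.mem_nhds hp] with x hxK hx using Set.mem_iInter.1 (hφt x hx).2 hxK

end ConvexGluing

theorem sqrt_sum_sq_smul {ι : Type*} [Fintype ι] {c : ℝ} (hc : 0 ≤ c) (v : ι → ℝ) :
    √(∑ i, ((c • v) i) ^ 2) = c * √(∑ i, (v i) ^ 2) := by
  simp only [Pi.smul_apply, smul_eq_mul, mul_pow, ← mul_sum]
  rw [Real.sqrt_mul (sq_nonneg c), Real.sqrt_sq hc]

theorem exists_contDiff_vectorField_tsupport_subset {E ι : Type*} [NormedAddCommGroup E]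
    [NormedSpace ℝ E] [FiniteDimensional ℝ E] [Fintype ι] {s : Set E} {p : E} {m : ℕ∞}
    (hs : s ∈ 𝓝 p) (v : ι → ℝ) :
    ∃ W : E → ι → ℝ, tsupport W ⊆ s ∧ HasCompactSupport W ∧ ContDiff ℝ m W ∧
      ContDiff ℝ m (fun x ↦ √(∑ i, (W x i) ^ 2)) ∧ W p = v := by
  obtain ⟨χ, hχs, hχc, hχ, hχI, hχp⟩ := exists_contDiff_tsupport_subset (n := m) hs
  have hχ0 (x : E) : 0 ≤ χ x := (hχI ⟨x, rfl⟩).1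
  refine ⟨fun x ↦ χ x • v, (tsupport_smul_subset_left χ _).trans hχs, hχc.smul_right,
    hχ.smul contDiff_const, ?_, by simp [hχp]⟩
  simpa only [sqrt_sum_sq_smul (hχ0 _)] using hχ.mul contDiff_const

section ViscosityHessian

variable {n : ℕ}

theorem hess2_congr_of_eventuallyEq {φ h : (Fin n → ℝ) → ℝ} {p : Fin n → ℝ} (hφh : φ =ᶠ[𝓝 p] h)
    (i j : Fin n) : hess2 φ p i j = hess2 h p i j := by
  have hfderiv : (fun x ↦ fderiv ℝ φ x (Pi.single i 1)) =ᶠ[𝓝 p]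
      fun x ↦ fderiv ℝ h x (Pi.single i 1) :=
    hφh.fderiv.fun_comp fun L ↦ L (Pi.single i 1)
  rw [hess2, hess2, hfderiv.fderiv_eq]

/-- `f` is a viscosity supersolution of `−Σ WⁱWʲ ∂ᵢⱼf + Σ A_{ij} WⁱWʲ = 0` on `Ω`. Test functions
are `C²` on all of `Ω` and touch `f` from below on all of `Ω`, up to an additive constant. -/
def IsViscositySupersolutionOn (Ω : Set (Fin n → ℝ)) (f : (Fin n → ℝ) → ℝ)
    (A : (Fin n → ℝ) → Matrix (Fin n) (Fin n) ℝ) (W : (Fin n → ℝ) → Fin n → ℝ) : Prop :=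
  ∀ x ∈ Ω, ∀ φ : (Fin n → ℝ) → ℝ, ContDiffOn ℝ 2 φ Ω →
    (∀ y ∈ Ω, f x - φ x ≤ f y - φ y) →
    0 ≤ -(∑ i, ∑ j, W x i * W x j * hess2 φ x i j) + ∑ i, ∑ j, A x i j * W x i * W x j

/-- `Hess f ≤ B` at `p` in the viscosity sense, for a function `f` on `Ω`. Test functions are `C²`
and touch `f` from below on some open neighbourhood of `p` in `Ω`; positive semidefiniteness is
expressed through the quadratic form, as `B` need not be symmetric. -/
def ViscosityHessLEAt (Ω : Set (Fin n → ℝ)) (f : (Fin n → ℝ) → ℝ)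
    (B : Matrix (Fin n) (Fin n) ℝ) (p : Fin n → ℝ) : Prop :=
  ∀ (U : Set (Fin n → ℝ)) (h : (Fin n → ℝ) → ℝ),
    IsOpen U → p ∈ U → U ⊆ Ω → ContDiffOn ℝ 2 h U → h p = f p →
    (∀ x ∈ U, h x ≤ f x) →
    ∀ v : Fin n → ℝ, 0 ≤ ∑ i, ∑ j, (B i j - hess2 h p i j) * v i * v j

variable {Ω : Set (Fin n → ℝ)} {f : (Fin n → ℝ) → ℝ}
  {A : (Fin n → ℝ) → Matrix (Fin n) (Fin n) ℝ}

theorem IsViscositySupersolutionOn.quadraticForm_sub_hess2_nonneg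
    {W : (Fin n → ℝ) → Fin n → ℝ} (hfW : IsViscositySupersolutionOn Ω f A W) (hΩ : IsOpen Ω)
    (hf : ∀ x ∈ Ω, (𝓝[Ω] x).IsBoundedUnder (· ≥ ·) f) {p : Fin n → ℝ} (hp : p ∈ Ω)
    {U : Set (Fin n → ℝ)} {h : (Fin n → ℝ) → ℝ} (hU : U ∈ 𝓝 p) (hh : ContDiffOn ℝ 2 h U)
    (hhp : h p = f p) (hle : ∀ x ∈ U, h x ≤ f x) :
    0 ≤ ∑ i, ∑ j, (A p i j - hess2 h p i j) * W p i * W p j := by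
  obtain ⟨φ, hφ, hφf, hφh⟩ := exists_contDiffOn_le_eventuallyEq (m := 2) hΩ hf hp hU hh hle
  have hφp : φ p = f p := hφh.eq_of_nhds.trans hhp
  have hmin (y) (hy : y ∈ Ω) : f p - φ p ≤ f y - φ y := by linarith [hφf y hy]
  calc
    0 ≤ -(∑ i, ∑ j, W p i * W p j * hess2 φ p i j) + ∑ i, ∑ j, A p i j * W p i * W p j :=
      hfW p hp φ hφ hmin
    _ = ∑ i, ∑ j, (A p i j - hess2 h p i j) * W p i * W p j := by
      simp only [hess2_congr_of_eventuallyEq hφh, neg_add_eq_sub, ← sum_sub_distrib]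
      congr! 2
      ring

theorem viscosity_supersolution_implies_viscosity_hessian_general (hΩ : IsOpen Ω)
    (hf : ∀ x ∈ Ω, (𝓝[Ω] x).IsBoundedUnder (· ≥ ·) f)
    (hsuper : ∀ W : (Fin n → ℝ) → Fin n → ℝ, ContDiff ℝ (⊤ : ℕ∞) W → HasCompactSupport W →
      tsupport W ⊆ Ω → ContDiffOn ℝ 1 (fun x ↦ √(∑ i, (W x i) ^ 2)) Ω →
      IsViscositySupersolutionOn Ω f A W) :
    ∀ p ∈ Ω, ViscosityHessLEAt Ω f (A p) p := by
  intro p hp U h hU hpU _ hh hhp hle v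
  obtain ⟨W, hWΩ, hWc, hW, hWnorm, rfl⟩ :=
    exists_contDiff_vectorField_tsupport_subset (m := ⊤) (hΩ.mem_nhds hp) v
  have hfW : IsViscositySupersolutionOn Ω f A W :=
    hsuper W hW hWc hWΩ (hWnorm.of_le (by norm_cast)).contDiffOn
  exact hfW.quadraticForm_sub_hess2_nonneg hΩ hf hp (hU.mem_nhds hpU) hh hhp hle

end ViscosityHessian

/-- If, for every compactly supported smooth vector field `W` on `Ω` whose Euclidean
norm is a `C¹` function on `Ω`, the function `f` is a viscosity supersolution of
`−Σ WⁱWʲ ∂ᵢⱼ f + Σ A_{ij} WⁱWʲ = 0` on `Ω`, then `f` satisfies `Hess f ≤ A` at every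
point of `Ω` in the viscosity sense. -/
theorem viscosity_supersolution_implies_viscosity_hessian {n : ℕ}
    (Ω : Set (Fin n → ℝ)) (hΩ : IsOpen Ω)
    (f : (Fin n → ℝ) → ℝ) (hf : ContinuousOn f Ω)
    (A : (Fin n → ℝ) → Matrix (Fin n) (Fin n) ℝ)
    (hAsmooth : ∀ i j, ContDiffOn ℝ (⊤ : ℕ∞) (fun x => A x i j) Ω)
    (hAsymm : ∀ x ∈ Ω, ∀ i j, A x i j = A x j i)
    (hsuper : ∀ W : (Fin n → ℝ) → (Fin n → ℝ), ContDiff ℝ (⊤ : ℕ∞) W → HasCompactSupport W →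
      tsupport W ⊆ Ω →
      ContDiffOn ℝ 1 (fun x => Real.sqrt (∑ i, (W x i) ^ 2)) Ω →
      ∀ x ∈ Ω, ∀ φ : (Fin n → ℝ) → ℝ, ContDiffOn ℝ 2 φ Ω →
        (∀ y ∈ Ω, f x - φ x ≤ f y - φ y) →
        0 ≤ -(∑ i, ∑ j, W x i * W x j * hess2 φ x i j) +
          ∑ i, ∑ j, A x i j * W x i * W x j) :
    ∀ p ∈ Ω, ∀ (U : Set (Fin n → ℝ)) (h : (Fin n → ℝ) → ℝ),
      IsOpen U → p ∈ U → U ⊆ Ω → ContDiffOn ℝ 2 h U → h p = f p →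
      (∀ x ∈ U, h x ≤ f x) →
      ∀ v : Fin n → ℝ,
        0 ≤ ∑ i, ∑ j, (A p i j - hess2 h p i j) * v i * v j :=
  viscosity_supersolution_implies_viscosity_hessian_general hΩ
    (fun x hx ↦ (hf x hx).isBoundedUnder_ge) hsuper
end

section
/- Let Ω ⊆ ℝⁿ be open, let f : Ω → ℝ be continuous, and let A be a smooth field of symmetric n×n real matrices on Ω. If f satisfies Hess f ≤ A on Ω in the distributional sense, then for every smooth, compactly supported vector field W : Ω → ℝⁿ and every smooth, nonnegative, compactly supported function φ : Ω → ℝ one has ∫_Ω [ −f(x) Σ_{i,j} ∂²(Wⁱ Wʲ φ)/∂xⱼ∂xᵢ(x) + Σ_{i,j} A_{ij}(x) Wⁱ(x) Wʲ(x) φ(x) ] dx ≥ 0; that is, f is a distributional supersolution of the equation −Σ_{i,j} WⁱWʲ ∂ᵢⱼf + Σ_{i,j} A_{ij}WⁱWʲ = 0. -/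
open Finset

/-!
The distributional inequality `Hess f ≤ A` says that a certain functional of a symmetric tensor
field, linear in that field, is nonnegative on every tensor square `V ⊗ V`. Formally
`φ (W ⊗ W) = (√φ W) ⊗ (√φ W)`, but `√φ` need not be smooth where `φ` vanishes. For `ε > 0` the
function `√(φ + ε)` is smooth, so testing with `V = √(φ + ε) W` shows that the functional is
nonnegative at `φ (W ⊗ W) + ε (W ⊗ W)`; by linearity one may let `ε → 0`.
-/

open MeasureTheory Filter
open scoped ContDiff Topology

/-- Smooth fields on `E` with values in `F` whose support is compact and contained in `Ω`. They
are total functions, and `Ω` need not be open. -/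
structure IsTestField {E F : Type*} [NormedAddCommGroup E] [NormedSpace ℝ E]
    [NormedAddCommGroup F] [NormedSpace ℝ F] (Ω : Set E) (T : E → F) : Prop where
  contDiff : ContDiff ℝ ∞ T
  hasCompactSupport : HasCompactSupport T
  tsupport_subset : tsupport T ⊆ Ω

namespace IsTestField

variable {E F G : Type*} [NormedAddCommGroup E] [NormedSpace ℝ E]
  [NormedAddCommGroup F] [NormedSpace ℝ F] [NormedAddCommGroup G] [NormedSpace ℝ G]
  {Ω : Set E} {T : E → F}

theorem of_tsupport_subset {S : E → G} (hT : IsTestField Ω T) (hS : ContDiff ℝ ∞ S)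
    (hST : tsupport S ⊆ tsupport T) : IsTestField Ω S where
  contDiff := hS
  hasCompactSupport := hT.hasCompactSupport.of_isClosed_subset (isClosed_tsupport S) hST
  tsupport_subset := hST.trans hT.tsupport_subset

theorem of_forall_eq_zero {S : E → G} (hT : IsTestField Ω T) (hS : ContDiff ℝ ∞ S)
    (hST : ∀ x, T x = 0 → S x = 0) : IsTestField Ω S :=
  hT.of_tsupport_subset hS (closure_mono fun x hSx hTx => hSx (hST x hTx))

theorem smul_left {ψ : E → ℝ} (hT : IsTestField Ω T) (hψ : ContDiff ℝ ∞ ψ) :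
    IsTestField Ω (fun x => ψ x • T x) :=
  hT.of_forall_eq_zero (hψ.smul hT.contDiff) fun x hx => by rw [hx, smul_zero]

theorem apply {ι : Type*} [Fintype ι] {T : E → ι → F} (hT : IsTestField Ω T) (i : ι) :
    IsTestField Ω (fun x => T x i) :=
  hT.of_forall_eq_zero (contDiff_pi.1 hT.contDiff i) fun _ hx => congrFun hx i

theorem zero : IsTestField Ω (0 : E → F) where
  contDiff := contDiff_zero_fun
  hasCompactSupport := .zero
  tsupport_subset := by simp

theorem add {S : E → F} (hS : IsTestField Ω S) (hT : IsTestField Ω T) :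
    IsTestField Ω (S + T) where
  contDiff := hS.contDiff.add hT.contDiff
  hasCompactSupport := hS.hasCompactSupport.add hT.hasCompactSupport
  tsupport_subset :=
    (tsupport_add S T).trans (Set.union_subset hS.tsupport_subset hT.tsupport_subset)

theorem sum {ι : Type*} {T : ι → E → F} {s : Finset ι} (hT : ∀ i ∈ s, IsTestField Ω (T i)) :
    IsTestField Ω (fun x => ∑ i ∈ s, T i x) := by
  rw [← sum_fn]
  exact sum_induction T (IsTestField Ω) (fun _ _ => add) zero hT

theorem fderiv_apply (hT : IsTestField Ω T) (v : E) :
    IsTestField Ω (fun x => fderiv ℝ T x v) :=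
  hT.of_tsupport_subset ((hT.contDiff.fderiv_right (by simp)).clm_apply contDiff_const)
    (tsupport_fderiv_apply_subset ℝ v)

theorem integrableOn_mul [MeasurableSpace E] [OpensMeasurableSpace E] {μ : Measure E}
    {u k : E → ℝ} (hu : LocallyIntegrableOn u Ω μ) (hk : IsTestField Ω k) :
    IntegrableOn (fun x => u x * k x) Ω μ := by
  have integrableOn_tsupport : IntegrableOn (fun x => u x * k x) (tsupport k) μ :=
    (hu.integrableOn_compact_subset hk.tsupport_subset hk.hasCompactSupport).mul_continuousOn
      hk.contDiff.continuous.continuousOn hk.hasCompactSupport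
  have support_subset : Function.support (fun x => u x * k x) ⊆ tsupport k :=
    (Function.support_mul_subset_right u k).trans (subset_tsupport k)
  exact ((integrableOn_iff_integrable_of_support_subset support_subset).1
    integrableOn_tsupport).integrableOn

end IsTestField

section Hessian

variable {n : ℕ}

theorem hess2_add {g h : (Fin n → ℝ) → ℝ} (hg : ContDiff ℝ 2 g) (hh : ContDiff ℝ 2 h)
    (x : Fin n → ℝ) (i j : Fin n) :
    hess2 (fun y => g y + h y) x i j = hess2 g x i j + hess2 h x i j := by
  have differentiable_fderiv_apply {k : (Fin n → ℝ) → ℝ} (hk : ContDiff ℝ 2 k) :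
      Differentiable ℝ (fun y => fderiv ℝ k y (Pi.single i 1)) :=
    ((hk.fderiv_right (m := 1) (by norm_num)).clm_apply contDiff_const).differentiable (by simp)
  have fderiv_add_apply (y : Fin n → ℝ) : fderiv ℝ (fun z => g z + h z) y (Pi.single i 1) =
      fderiv ℝ g y (Pi.single i 1) + fderiv ℝ h y (Pi.single i 1) := by
    rw [fderiv_fun_add (hg.differentiable (by simp) y) (hh.differentiable (by simp) y),
      add_apply]
  simp only [hess2, fderiv_add_apply]
  rw [fderiv_fun_add (differentiable_fderiv_apply hg x) (differentiable_fderiv_apply hh x),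
    add_apply]

theorem hess2_const_mul (c : ℝ) (h : (Fin n → ℝ) → ℝ) (x : Fin n → ℝ) (i j : Fin n) :
    hess2 (fun y => c * h y) x i j = c * hess2 h x i j := by
  have fderiv_const_mul_apply (k : (Fin n → ℝ) → ℝ) (y v : Fin n → ℝ) :
      fderiv ℝ (fun z => c * k z) y v = c * fderiv ℝ k y v :=
    DFunLike.congr_fun (congrFun (fderiv_const_smul_field c) y) v
  simp only [hess2, fderiv_const_mul_apply]

/-- The double divergence `Σ_{i,j} ∂ⱼ∂ᵢ T_{ij}` of a matrix field, the formal adjoint of the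
Hessian. Matrix fields are encoded as `Fin n → Fin n → ℝ`-valued functions, since that type
carries a norm and `Matrix` does not. -/
noncomputable def doubleDiv (T : (Fin n → ℝ) → Fin n → Fin n → ℝ) (x : Fin n → ℝ) : ℝ :=
  ∑ i, ∑ j, hess2 (fun y => T y i j) x i j

section doubleDiv

variable {Ω : Set (Fin n → ℝ)} {S T : (Fin n → ℝ) → Fin n → Fin n → ℝ}

theorem doubleDiv_add (hS : ContDiff ℝ 2 S) (hT : ContDiff ℝ 2 T) (x : Fin n → ℝ) :
    doubleDiv (fun y => S y + T y) x = doubleDiv S x + doubleDiv T x := by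
  have contDiff_entry {R : (Fin n → ℝ) → Fin n → Fin n → ℝ} (hR : ContDiff ℝ 2 R)
      (i j : Fin n) : ContDiff ℝ 2 (fun y => R y i j) :=
    contDiff_pi.1 (contDiff_pi.1 hR i) j
  simp only [doubleDiv, Pi.add_apply, hess2_add (contDiff_entry hS _ _) (contDiff_entry hT _ _),
    sum_add_distrib]

theorem doubleDiv_const_smul (c : ℝ) (T : (Fin n → ℝ) → Fin n → Fin n → ℝ) (x : Fin n → ℝ) :
    doubleDiv (fun y => c • T y) x = c * doubleDiv T x := by
  simp only [doubleDiv, Pi.smul_apply, smul_eq_mul, hess2_const_mul, mul_sum]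

theorem IsTestField.doubleDiv (hT : IsTestField Ω T) : IsTestField Ω (doubleDiv T) :=
  .sum fun i _ => .sum fun j _ => (((hT.apply i).apply j).fderiv_apply _).fderiv_apply _

end doubleDiv

/-- The tensor square `W ⊗ W` of a vector field. -/
def tensorSq (W : (Fin n → ℝ) → Fin n → ℝ) (x : Fin n → ℝ) (i j : Fin n) : ℝ :=
  W x i * W x j

theorem IsTestField.tensorSq {Ω : Set (Fin n → ℝ)} {W : (Fin n → ℝ) → Fin n → ℝ}
    (hW : IsTestField Ω W) : IsTestField Ω (tensorSq W) :=
  hW.of_forall_eq_zero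
    (contDiff_pi.2 fun i => contDiff_pi.2 fun j => (hW.apply i).contDiff.mul (hW.apply j).contDiff)
    fun x hx => by ext i j; simp [_root_.tensorSq, hx]

theorem tensorSq_sqrt_smul {ψ : (Fin n → ℝ) → ℝ} (hψ : ∀ x, 0 ≤ ψ x)
    (W : (Fin n → ℝ) → Fin n → ℝ) :
    tensorSq (fun x => √(ψ x) • W x) = fun x => ψ x • tensorSq W x := by
  ext x i j
  simp only [tensorSq, Pi.smul_apply, smul_eq_mul]
  rw [mul_mul_mul_comm, Real.mul_self_sqrt (hψ x)]

/-- The pairing of `A - Hess f` with a matrix field `T` over `Ω`, both derivatives of `f` being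
moved onto `T`. -/
noncomputable def hessianGap (μ : Measure (Fin n → ℝ)) (Ω : Set (Fin n → ℝ))
    (f : (Fin n → ℝ) → ℝ) (A : (Fin n → ℝ) → Matrix (Fin n) (Fin n) ℝ)
    (T : (Fin n → ℝ) → Fin n → Fin n → ℝ) : ℝ :=
  ∫ x in Ω, (-(f x * doubleDiv T x) + ∑ i, ∑ j, A x i j * T x i j) ∂μ

section hessianGap

variable {μ : Measure (Fin n → ℝ)} {Ω : Set (Fin n → ℝ)} {f : (Fin n → ℝ) → ℝ}
  {A : (Fin n → ℝ) → Matrix (Fin n) (Fin n) ℝ}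

theorem IsTestField.integrableOn_sum_mul {T : (Fin n → ℝ) → Fin n → Fin n → ℝ}
    (hA : ∀ i j, LocallyIntegrableOn (fun x => A x i j) Ω μ) (hT : IsTestField Ω T) :
    IntegrableOn (fun x => ∑ i, ∑ j, A x i j * T x i j) Ω μ :=
  integrable_finsetSum _ fun i _ => integrable_finsetSum _ fun j _ =>
    ((hT.apply i).apply j).integrableOn_mul (hA i j)

theorem hessianGap_eq_sub {T : (Fin n → ℝ) → Fin n → Fin n → ℝ}
    (hf : LocallyIntegrableOn f Ω μ) (hA : ∀ i j, LocallyIntegrableOn (fun x => A x i j) Ω μ)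
    (hT : IsTestField Ω T) :
    hessianGap μ Ω f A T =
      (∫ x in Ω, ∑ i, ∑ j, A x i j * T x i j ∂μ) - ∫ x in Ω, f x * doubleDiv T x ∂μ := by
  simp only [hessianGap, neg_add_eq_sub]
  exact integral_sub (hT.integrableOn_sum_mul hA) (hT.doubleDiv.integrableOn_mul hf)

theorem hessianGap_add {S T : (Fin n → ℝ) → Fin n → Fin n → ℝ}
    (hf : LocallyIntegrableOn f Ω μ) (hA : ∀ i j, LocallyIntegrableOn (fun x => A x i j) Ω μ)
    (hS : IsTestField Ω S) (hT : IsTestField Ω T) :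
    hessianGap μ Ω f A (fun x => S x + T x) = hessianGap μ Ω f A S + hessianGap μ Ω f A T := by
  have integrable_integrand {R : (Fin n → ℝ) → Fin n → Fin n → ℝ} (hR : IsTestField Ω R) :
      IntegrableOn (fun x => -(f x * doubleDiv R x) + ∑ i, ∑ j, A x i j * R x i j) Ω μ :=
    (hR.doubleDiv.integrableOn_mul hf).neg.add (hR.integrableOn_sum_mul hA)
  have contDiff_two {R : (Fin n → ℝ) → Fin n → Fin n → ℝ} (hR : IsTestField Ω R) :
      ContDiff ℝ 2 R := contDiff_infty.1 hR.contDiff 2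
  unfold hessianGap
  rw [← integral_add (integrable_integrand hS) (integrable_integrand hT)]
  congr 1 with x
  simp only [doubleDiv_add (contDiff_two hS) (contDiff_two hT), Pi.add_apply, mul_add,
    sum_add_distrib]
  ring

theorem hessianGap_const_smul (c : ℝ) (T : (Fin n → ℝ) → Fin n → Fin n → ℝ) :
    hessianGap μ Ω f A (fun x => c • T x) = c * hessianGap μ Ω f A T := by
  simp only [hessianGap, doubleDiv_const_smul, Pi.smul_apply, smul_eq_mul, mul_left_comm _ c,
    ← mul_sum, ← mul_neg, ← mul_add, integral_const_mul]

theorem hessianGap_smul_tensorSq_add_nonneg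
    (hf : LocallyIntegrableOn f Ω μ) (hA : ∀ i j, LocallyIntegrableOn (fun x => A x i j) Ω μ)
    (hgap : ∀ V, IsTestField Ω V → 0 ≤ hessianGap μ Ω f A (tensorSq V))
    {W : (Fin n → ℝ) → Fin n → ℝ} (hW : IsTestField Ω W)
    {φ : (Fin n → ℝ) → ℝ} (hφ : ContDiff ℝ ∞ φ) (hφ_nonneg : ∀ x, 0 ≤ φ x)
    {ε : ℝ} (hε : 0 < ε) :
    0 ≤ hessianGap μ Ω f A (fun x => φ x • tensorSq W x) +
      ε * hessianGap μ Ω f A (tensorSq W) := by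
  have pos (x : Fin n → ℝ) : 0 < φ x + ε := add_pos_of_nonneg_of_pos (hφ_nonneg x) hε
  have contDiff_sqrt : ContDiff ℝ ∞ (fun x => √(φ x + ε)) :=
    (hφ.add contDiff_const).sqrt fun x => (pos x).ne'
  calc 0 ≤ hessianGap μ Ω f A (tensorSq fun x => √(φ x + ε) • W x) :=
        hgap _ (hW.smul_left contDiff_sqrt)
    _ = hessianGap μ Ω f A (fun x => φ x • tensorSq W x + ε • tensorSq W x) := by
        simp only [tensorSq_sqrt_smul fun x => (pos x).le, add_smul]
    _ = hessianGap μ Ω f A (fun x => φ x • tensorSq W x) +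
          ε * hessianGap μ Ω f A (tensorSq W) := by
        rw [hessianGap_add hf hA (hW.tensorSq.smul_left hφ) (hW.tensorSq.smul_left contDiff_const),
          hessianGap_const_smul]

theorem hessianGap_smul_tensorSq_nonneg
    (hf : LocallyIntegrableOn f Ω μ) (hA : ∀ i j, LocallyIntegrableOn (fun x => A x i j) Ω μ)
    (hgap : ∀ V, IsTestField Ω V → 0 ≤ hessianGap μ Ω f A (tensorSq V))
    {W : (Fin n → ℝ) → Fin n → ℝ} (hW : IsTestField Ω W)
    {φ : (Fin n → ℝ) → ℝ} (hφ : ContDiff ℝ ∞ φ) (hφ_nonneg : ∀ x, 0 ≤ φ x) :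
    0 ≤ hessianGap μ Ω f A (fun x => φ x • tensorSq W x) := by
  set a := hessianGap μ Ω f A (fun x => φ x • tensorSq W x)
  set b := hessianGap μ Ω f A (tensorSq W)
  have tendsto_a : Tendsto (fun ε : ℝ => a + ε * b) (𝓝[>] 0) (𝓝 a) :=
    (Continuous.tendsto' (by fun_prop) 0 a (by simp)).mono_left nhdsWithin_le_nhds
  exact ge_of_tendsto tendsto_a <| eventually_mem_nhdsWithin.mono fun ε hε =>
    hessianGap_smul_tensorSq_add_nonneg hf hA hgap hW hφ hφ_nonneg hε

end hessianGap

end Hessian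

theorem distributional_hessian_implies_distributional_supersolution_general {n : ℕ}
    {μ : Measure (Fin n → ℝ)} {Ω : Set (Fin n → ℝ)}
    {f : (Fin n → ℝ) → ℝ} (hf : LocallyIntegrableOn f Ω μ)
    {A : (Fin n → ℝ) → Matrix (Fin n) (Fin n) ℝ}
    (hA : ∀ i j, LocallyIntegrableOn (fun x => A x i j) Ω μ)
    (hdist : ∀ V : (Fin n → ℝ) → (Fin n → ℝ), IsTestField Ω V →
      ∫ x in Ω, f x * ∑ i, ∑ j, hess2 (fun y => V y i * V y j) x i j ∂μ ≤
        ∫ x in Ω, ∑ i, ∑ j, A x i j * V x i * V x j ∂μ)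
    {W : (Fin n → ℝ) → (Fin n → ℝ)} (hW : IsTestField Ω W)
    {φ : (Fin n → ℝ) → ℝ} (hφ : ContDiff ℝ ∞ φ) (hφ_nonneg : ∀ x, 0 ≤ φ x) :
    0 ≤ ∫ x in Ω,
      (-(f x * ∑ i, ∑ j, hess2 (fun y => W y i * W y j * φ y) x i j) +
        ∑ i, ∑ j, A x i j * W x i * W x j * φ x) ∂μ := by
  have hgap (V : (Fin n → ℝ) → (Fin n → ℝ)) (hV : IsTestField Ω V) :
      0 ≤ hessianGap μ Ω f A (tensorSq V) := by
    rw [hessianGap_eq_sub hf hA hV.tensorSq, sub_nonneg]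
    simpa only [doubleDiv, tensorSq, mul_assoc] using hdist V hV
  have smul_tensorSq_eq : (fun x => φ x • tensorSq W x) = fun x i j => W x i * W x j * φ x := by
    ext x i j
    exact mul_comm _ _
  have nonneg := hessianGap_smul_tensorSq_nonneg hf hA hgap hW hφ hφ_nonneg
  rw [smul_tensorSq_eq] at nonneg
  simpa only [hessianGap, doubleDiv, mul_assoc] using nonneg

/-- If `Hess f ≤ A` holds on `Ω` in the distributional sense, then for every compactly
supported smooth vector field `W` and every smooth nonnegative compactly supported
function `φ`, `f` is a distributional supersolution of
`−Σ WⁱWʲ ∂ᵢⱼ f + Σ A_{ij} WⁱWʲ = 0`. -/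
theorem distributional_hessian_implies_distributional_supersolution {n : ℕ}
    (Ω : Set (Fin n → ℝ)) (hΩ : IsOpen Ω)
    (f : (Fin n → ℝ) → ℝ) (hf : ContinuousOn f Ω)
    (A : (Fin n → ℝ) → Matrix (Fin n) (Fin n) ℝ)
    (hAsmooth : ∀ i j, ContDiffOn ℝ (⊤ : ℕ∞) (fun x => A x i j) Ω)
    (hAsymm : ∀ x ∈ Ω, ∀ i j, A x i j = A x j i)
    (hdist : ∀ V : (Fin n → ℝ) → (Fin n → ℝ), ContDiff ℝ (⊤ : ℕ∞) V → HasCompactSupport V →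
      tsupport V ⊆ Ω →
      ∫ x in Ω, f x * ∑ i, ∑ j, hess2 (fun y => V y i * V y j) x i j ≤
        ∫ x in Ω, ∑ i, ∑ j, A x i j * V x i * V x j) :
    ∀ W : (Fin n → ℝ) → (Fin n → ℝ), ContDiff ℝ (⊤ : ℕ∞) W → HasCompactSupport W →
      tsupport W ⊆ Ω →
      ∀ φ : (Fin n → ℝ) → ℝ, ContDiff ℝ (⊤ : ℕ∞) φ → HasCompactSupport φ → tsupport φ ⊆ Ω →
        (∀ x, 0 ≤ φ x) →
        0 ≤ ∫ x in Ω,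
          (-(f x * ∑ i, ∑ j, hess2 (fun y => W y i * W y j * φ y) x i j) +
            ∑ i, ∑ j, A x i j * W x i * W x j * φ x) := by
  intro W hW hWc hWΩ φ hφ _ _ hφ_nonneg
  exact distributional_hessian_implies_distributional_supersolution_general
    (hf.locallyIntegrableOn hΩ.measurableSet)
    (fun i j => (hAsmooth i j).continuousOn.locallyIntegrableOn hΩ.measurableSet)
    (fun V hV => hdist V hV.contDiff hV.hasCompactSupport hV.tsupport_subset)
    ⟨hW, hWc, hWΩ⟩ hφ hφ_nonneg
end
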